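/- arXiv:2211.00268 — 5 statements merged into one kernel-verified Lean document; each statement's English description precedes it below -/
import Mathlib

section
/- Let beta, c1, alpha, nu, d, xi0 > 0 with alpha >= beta*nu/d, let T >= 2 be an integer, let 0 < epsilon < 1, let L >= 1 be an integer, and suppose c1*xi_L^alpha > (1/2)*T^{-alpha}*epsilon. Then sum_{l=1}^{L} xi_l^{-beta} < 2^{beta/alpha} * c1^{beta/alpha} * T^{beta} * (1 - T^{-beta})^{-1} * epsilon^{-d/nu}. -/
/-- With `ξ_l = ξ0 T^{-l}` and `c1 ξ_L^α > (1/2) T^{-α} ε`, the sum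
`∑_{l=1}^L ξ_l^{-β}` is bounded by
`2^{β/α} c1^{β/α} T^β (1 - T^{-β})⁻¹ ε^{-d/ν}`. -/
theorem stmt4 (beta c1 alpha nu d xi0 eps : ℝ) (T L : ℤ)
    (hb : 0 < beta) (hc1 : 0 < c1) (ha : 0 < alpha) (hnu : 0 < nu) (hd : 0 < d)
    (hxi0 : 0 < xi0) (hab : alpha ≥ beta * nu / d)
    (hT : 2 ≤ T) (heps0 : 0 < eps) (heps1 : eps < 1) (hL : 1 ≤ L)
    (h : c1 * (xi0 * (T : ℝ) ^ (-(L : ℝ))) ^ alpha > (1 / 2) * (T : ℝ) ^ (-alpha) * eps) :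
    ∑ l ∈ Finset.Icc (1 : ℤ) L, (xi0 * (T : ℝ) ^ (-(l : ℝ))) ^ (-beta)
      < (2 : ℝ) ^ (beta / alpha) * c1 ^ (beta / alpha) * (T : ℝ) ^ beta *
        (1 - (T : ℝ) ^ (-beta))⁻¹ * eps ^ (-(d / nu)) := by
  have hT2 : (2 : ℝ) ≤ (T : ℝ) := by exact_mod_cast hT
  have hT0 : (0 : ℝ) < (T : ℝ) := by linarith
  have hr0 : 0 < (T : ℝ) ^ (-beta) := Real.rpow_pos_of_pos hT0 _
  have hr1 : (T : ℝ) ^ (-beta) < 1 :=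
    Real.rpow_lt_one_of_one_lt_of_neg (by linarith) (by linarith)
  have hxpos : ∀ l : ℝ, 0 < xi0 * (T : ℝ) ^ (-l) := fun l =>
    mul_pos hxi0 (Real.rpow_pos_of_pos hT0 _)
  have hapos : ∀ l : ℝ, 0 < (xi0 * (T : ℝ) ^ (-l)) ^ (-beta) := fun l =>
    Real.rpow_pos_of_pos (hxpos l) _
  have hstep : ∀ l : ℝ, (xi0 * (T : ℝ) ^ (-l)) ^ (-beta)
      = (T : ℝ) ^ (-beta) * (xi0 * (T : ℝ) ^ (-(l + 1))) ^ (-beta) := by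
    intro l
    rw [← Real.mul_rpow hT0.le (hxpos _).le]
    congr 1
    have : (T : ℝ) ^ (-l) = T * (T : ℝ) ^ (-(l + 1)) := by
      nth_rewrite 2 [← Real.rpow_one (T : ℝ)]
      rw [← Real.rpow_add hT0]
      congr 1
      ring
    rw [this]
    ring
  have hsum : ∀ n : ℤ, 1 ≤ n → (1 - (T : ℝ) ^ (-beta)) *
      ∑ l ∈ Finset.Icc (1 : ℤ) n, (xi0 * (T : ℝ) ^ (-(l : ℝ))) ^ (-beta)
      ≤ (xi0 * (T : ℝ) ^ (-(n : ℝ))) ^ (-beta) := by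
    intro n hn
    induction n, hn using Int.le_induction with
    | base =>
      rw [Finset.Icc_self, Finset.sum_singleton]
      nlinarith [mul_pos hr0 (hapos ((1 : ℤ) : ℝ))]
    | succ n hn ih =>
      have hI : Finset.Icc (1 : ℤ) (n + 1) = insert (n + 1) (Finset.Icc 1 n) := by
        ext x
        simp only [Finset.mem_Icc, Finset.mem_insert]
        omega
      rw [hI, Finset.sum_insert (by simp)]
      have h1 := hstep (n : ℝ)
      push_cast at ih ⊢
      rw [mul_add]
      linarith
  have hS := hsum L hL
  have hX := hxpos (L : ℝ)
  generalize xi0 * (T : ℝ) ^ (-(L : ℝ)) = X at h hS hX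
  have hba : 0 < beta / alpha := div_pos hb ha
  have e1 : alpha * (beta / alpha) = beta := by field_simp
  have hp := Real.rpow_lt_rpow (by positivity) h hba
  rw [Real.mul_rpow (by positivity) heps0.le, Real.mul_rpow (by norm_num) (by positivity),
    Real.mul_rpow hc1.le (by positivity), ← Real.rpow_mul hX.le, ← Real.rpow_mul hT0.le,
    neg_mul, e1, Real.rpow_neg hT0.le, one_div, Real.inv_rpow (by norm_num)] at hp
  have hdn : beta / alpha ≤ d / nu := by
    rw [ge_iff_le, div_le_iff₀ hd] at hab
    rw [div_le_div_iff₀ ha hnu]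
    linarith
  have he : eps ^ (-(beta / alpha)) ≤ eps ^ (-(d / nu)) :=
    Real.rpow_le_rpow_of_exponent_ge heps0 heps1.le (by linarith)
  have hkey : X ^ (-beta) < (2 : ℝ) ^ (beta / alpha) * c1 ^ (beta / alpha) * (T : ℝ) ^ beta
      * eps ^ (-(beta / alpha)) := by
    rw [Real.rpow_neg hX.le, Real.rpow_neg heps0.le]
    have p1 : 0 < X ^ beta := Real.rpow_pos_of_pos hX _
    have p2 : 0 < (T : ℝ) ^ beta := Real.rpow_pos_of_pos hT0 _
    have p3 : 0 < eps ^ (beta / alpha) := Real.rpow_pos_of_pos heps0 _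
    have p4 : 0 < (2 : ℝ) ^ (beta / alpha) := by positivity
    generalize X ^ beta = x at *
    generalize (T : ℝ) ^ beta = t at *
    generalize eps ^ (beta / alpha) = e at *
    generalize (2 : ℝ) ^ (beta / alpha) = w at *
    rw [← div_eq_mul_inv, inv_eq_one_div, div_lt_div_iff₀ p1 p3]
    have := mul_lt_mul_of_pos_left hp (mul_pos p4 p2)
    have e2 : w * t * (w⁻¹ * t⁻¹ * e) = e := by field_simp
    rw [e2] at this
    linarith
  have hq : 0 < 1 - (T : ℝ) ^ (-beta) := by linarith
  have hfin := lt_of_le_of_lt hS (lt_of_lt_of_le hkey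
    (mul_le_mul_of_nonneg_left he (by positivity)))
  rw [mul_comm, ← lt_div_iff₀ hq] at hfin
  refine lt_of_lt_of_eq hfin ?_
  rw [div_eq_mul_inv]
  ring
end

section
/- Let alpha, beta, nu, d, c1, c4, c6, xi0 > 0 satisfy alpha*d = 2*beta*nu, let T >= 2 be an integer, and let 0 < epsilon < e^{-1} with epsilon <= 2*c1*xi0^alpha*T^{-alpha}. Set L = ceil( log(2*c1*xi0^alpha*epsilon^{-1}) / (alpha*log T) ) and n_l = ceil( (2*L*epsilon^{-1}*c6)^{d/nu} * xi_l^{beta} ) for l = 1, ..., L. Then c4 * sum_{l=1}^{L} n_l * xi_l^{-beta} <= c5 * epsilon^{-d/nu} * (log(epsilon^{-1}))^{1 + d/nu}, where c5 = c4*(2*c6)^{d/nu}*c7^{1+d/nu} + c4*2^{beta/alpha}*c1^{beta/alpha}*T^{beta}*(1 - T^{-beta})^{-1} and c7 = 1/(alpha*log T) + max(0, log(2*c1*xi0^alpha)/(alpha*log T)) + 1. -/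
theorem geo_aux (t b : ℝ) (ht : 1 < t) (hb : 0 < b) (N : ℕ) :
    ∑ l ∈ Finset.Icc (1 : ℤ) (N : ℤ), t ^ ((l : ℝ) * b) ≤
      t ^ ((N : ℝ) * b) * (1 - t ^ (-b))⁻¹ := by
  have h0 : 0 < t := by linarith
  have hlt : t ^ (-b) < 1 := Real.rpow_lt_one_of_one_lt_of_neg ht (by linarith)
  have hK : 0 < 1 - t ^ (-b) := by linarith
  induction N with
  | zero => simp; exact le_of_lt hlt
  | succ N ih =>
    have hI : Finset.Icc (1 : ℤ) ((N + 1 : ℕ) : ℤ) = insert ((N : ℤ) + 1) (Finset.Icc (1 : ℤ) (N : ℤ)) := by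
      ext x; simp only [Finset.mem_Icc, Finset.mem_insert]; push_cast; omega
    rw [hI, Finset.sum_insert (by simp)]
    have e1 : t ^ ((N : ℝ) * b) = t ^ (((N : ℝ) + 1) * b) * t ^ (-b) := by
      rw [← Real.rpow_add h0]; congr 1; ring
    push_cast
    have e2 : t ^ (((N : ℝ) + 1) * b) * (1 - t ^ (-b))⁻¹ =
        t ^ (((N : ℝ) + 1) * b) + t ^ ((N : ℝ) * b) * (1 - t ^ (-b))⁻¹ := by
      rw [e1]; field_simp; ring
    rw [e2]; linarith

/-- Total cost bound in the boundary case `αd = 2βν` of the cost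
complexity theorem:
`c4 ∑_{l=1}^L n_l ξ_l^{-β} ≤ c5 ε^{-d/ν} (log ε⁻¹)^{1+d/ν}`. -/
theorem stmt7 (alpha beta nu d c1 c4 c6 xi0 eps : ℝ) (T : ℤ)
    (ha : 0 < alpha) (hb : 0 < beta) (hnu : 0 < nu) (hd : 0 < d)
    (hc1 : 0 < c1) (hc4 : 0 < c4) (hc6 : 0 < c6) (hxi0 : 0 < xi0)
    (heq : alpha * d = 2 * beta * nu) (hT : 2 ≤ T)
    (heps0 : 0 < eps) (heps1 : eps < Real.exp (-1))
    (heps2 : eps ≤ 2 * c1 * xi0 ^ alpha * (T : ℝ) ^ (-alpha))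
    (L : ℤ)
    (hL : L = ⌈Real.log (2 * c1 * xi0 ^ alpha * eps⁻¹) / (alpha * Real.log (T : ℝ))⌉)
    (n : ℤ → ℤ)
    (hn : ∀ l ∈ Finset.Icc (1 : ℤ) L,
      n l = ⌈(2 * (L : ℝ) * eps⁻¹ * c6) ^ (d / nu) * (xi0 * (T : ℝ) ^ (-(l : ℝ))) ^ beta⌉)
    (c5 c7 : ℝ)
    (hc7 : c7 = 1 / (alpha * Real.log (T : ℝ)) +
      max 0 (Real.log (2 * c1 * xi0 ^ alpha) / (alpha * Real.log (T : ℝ))) + 1)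
    (hc5 : c5 = c4 * (2 * c6) ^ (d / nu) * c7 ^ (1 + d / nu) +
      c4 * (2 : ℝ) ^ (beta / alpha) * c1 ^ (beta / alpha) * (T : ℝ) ^ beta *
        (1 - (T : ℝ) ^ (-beta))⁻¹) :
    c4 * ∑ l ∈ Finset.Icc (1 : ℤ) L, (n l : ℝ) * (xi0 * (T : ℝ) ^ (-(l : ℝ))) ^ (-beta)
      ≤ c5 * eps ^ (-(d / nu)) * (Real.log eps⁻¹) ^ (1 + d / nu) := by
  have hT2 : (2 : ℝ) ≤ (T : ℝ) := by exact_mod_cast hT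
  generalize (T : ℝ) = t at *
  have ht0 : 0 < t := by linarith
  have ht1 : 1 < t := by linarith
  have hlt : 0 < Real.log t := Real.log_pos ht1
  have hal : 0 < alpha * Real.log t := mul_pos ha hlt
  have hp : 0 < d / nu := div_pos hd hnu
  have hba : beta / alpha ≤ d / nu := by
    rw [div_le_div_iff₀ ha hnu]; nlinarith [mul_pos hb hnu]
  generalize d / nu = p at *
  have hx : 0 < xi0 ^ alpha := Real.rpow_pos_of_pos hxi0 _
  have hlog : 1 < Real.log eps⁻¹ := by
    rw [Real.log_inv]
    have := (Real.log_lt_iff_lt_exp heps0).2 heps1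
    linarith
  have heps_lt : eps < 1 := heps1.trans (by rw [Real.exp_lt_one_iff]; norm_num)
  have hB : 0 < 2 * c1 * xi0 ^ alpha := by positivity
  have hBe : 0 < 2 * c1 * xi0 ^ alpha * eps⁻¹ := by positivity
  set M := Real.log (2 * c1 * xi0 ^ alpha * eps⁻¹) / (alpha * Real.log t) with hM
  have hM1 : 1 ≤ M := by
    rw [hM, le_div_iff₀ hal, one_mul, ← Real.log_rpow ht0]
    apply Real.log_le_log (by positivity)
    rw [← div_eq_mul_inv, le_div_iff₀ heps0]
    have h1 : t ^ alpha * t ^ (-alpha) = 1 := by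
      rw [← Real.rpow_add ht0]; simp
    have h2 : 0 < t ^ alpha := by positivity
    calc t ^ alpha * eps ≤ t ^ alpha * (2 * c1 * xi0 ^ alpha * t ^ (-alpha)) := by gcongr
      _ = 2 * c1 * xi0 ^ alpha * (t ^ alpha * t ^ (-alpha)) := by ring
      _ = _ := by rw [h1, mul_one]
  have hLM : M ≤ (L : ℝ) := by rw [hL]; exact Int.le_ceil _
  have hLM1 : (L : ℝ) ≤ M + 1 := by rw [hL]; exact (Int.ceil_lt_add_one _).le
  have hL0 : (0 : ℝ) < L := by linarith
  have hLN : ∃ N : ℕ, L = (N : ℤ) := Int.eq_ofNat_of_zero_le (by exact_mod_cast hL0.le)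
  have hc7pos : 0 < c7 := by
    rw [hc7]; positivity
  have hLc : (L : ℝ) ≤ c7 * Real.log eps⁻¹ := by
    refine hLM1.trans ?_
    have hMe : M = Real.log (2 * c1 * xi0 ^ alpha) / (alpha * Real.log t) +
        1 / (alpha * Real.log t) * Real.log eps⁻¹ := by
      rw [hM, Real.log_mul hB.ne' (by positivity)]; ring
    rw [hMe, hc7]
    have h1 := le_max_right 0 (Real.log (2 * c1 * xi0 ^ alpha) / (alpha * Real.log t))
    have h2 := le_max_left 0 (Real.log (2 * c1 * xi0 ^ alpha) / (alpha * Real.log t))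
    nlinarith
  set A := (2 * (L : ℝ) * eps⁻¹ * c6) ^ p with hA
  have hterm : ∀ l ∈ Finset.Icc (1 : ℤ) L,
      (n l : ℝ) * (xi0 * t ^ (-(l : ℝ))) ^ (-beta) ≤ A + xi0 ^ (-beta) * t ^ ((l : ℝ) * beta) := by
    intro l hl
    have hy : 0 < xi0 * t ^ (-(l : ℝ)) := by positivity
    have h1 : (n l : ℝ) ≤ A * (xi0 * t ^ (-(l : ℝ))) ^ beta + 1 := by
      rw [hn l hl]; exact (Int.ceil_lt_add_one _).le
    have h2 : (xi0 * t ^ (-(l : ℝ))) ^ beta * (xi0 * t ^ (-(l : ℝ))) ^ (-beta) = 1 := by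
      rw [← Real.rpow_add hy]; simp
    have h3 : (xi0 * t ^ (-(l : ℝ))) ^ (-beta) = xi0 ^ (-beta) * t ^ ((l : ℝ) * beta) := by
      rw [Real.mul_rpow hxi0.le (by positivity), ← Real.rpow_mul ht0.le]; congr 2; ring
    calc (n l : ℝ) * (xi0 * t ^ (-(l : ℝ))) ^ (-beta)
        ≤ (A * (xi0 * t ^ (-(l : ℝ))) ^ beta + 1) * (xi0 * t ^ (-(l : ℝ))) ^ (-beta) := by gcongr
      _ = A * ((xi0 * t ^ (-(l : ℝ))) ^ beta * (xi0 * t ^ (-(l : ℝ))) ^ (-beta)) +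
          (xi0 * t ^ (-(l : ℝ))) ^ (-beta) := by ring
      _ = _ := by rw [h2, h3, mul_one]
  have hK : 0 < (1 - t ^ (-beta))⁻¹ := by
    have : t ^ (-beta) < 1 := Real.rpow_lt_one_of_one_lt_of_neg ht1 (by linarith)
    exact inv_pos.2 (by linarith)
  have hsum : ∑ l ∈ Finset.Icc (1 : ℤ) L, (n l : ℝ) * (xi0 * t ^ (-(l : ℝ))) ^ (-beta) ≤
      L * A + xi0 ^ (-beta) * (t ^ ((L : ℝ) * beta) * (1 - t ^ (-beta))⁻¹) := by
    refine (Finset.sum_le_sum hterm).trans ?_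
    rw [Finset.sum_add_distrib, ← Finset.mul_sum]
    obtain ⟨N, hN⟩ := hLN
    have hg := geo_aux t beta ht1 hb N
    have hx' : 0 ≤ xi0 ^ (-beta) := by positivity
    rw [hN]
    have := mul_le_mul_of_nonneg_left hg hx'
    simp only [Finset.sum_const, Int.card_Icc, nsmul_eq_mul]
    simp only [add_sub_cancel_right, Int.toNat_natCast, Int.cast_natCast]
    linarith
  have hfirst : L * A ≤ (2 * c6) ^ p * c7 ^ (1 + p) * (eps ^ (-p) * (Real.log eps⁻¹) ^ (1 + p)) := by
    have e : L * A = (2 * c6) ^ p * eps ^ (-p) * (L : ℝ) ^ (1 + p) := by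
      rw [hA, show 2 * (L : ℝ) * eps⁻¹ * c6 = (2 * c6) * eps⁻¹ * L by ring,
        Real.mul_rpow (by positivity) hL0.le, Real.mul_rpow (by positivity) (by positivity),
        Real.inv_rpow heps0.le, ← Real.rpow_neg heps0.le, Real.rpow_add hL0, Real.rpow_one]
      ring
    have h1 : (L : ℝ) ^ (1 + p) ≤ c7 ^ (1 + p) * (Real.log eps⁻¹) ^ (1 + p) := by
      rw [← Real.mul_rpow hc7pos.le (by linarith)]
      exact Real.rpow_le_rpow hL0.le hLc (by linarith)
    rw [e]
    calc _ ≤ (2 * c6) ^ p * eps ^ (-p) * (c7 ^ (1 + p) * (Real.log eps⁻¹) ^ (1 + p)) := by gcongr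
      _ = _ := by ring
  have hlogp : 1 ≤ (Real.log eps⁻¹) ^ (1 + p) := Real.one_le_rpow hlog.le (by linarith)
  have hTL : xi0 ^ (-beta) * t ^ ((L : ℝ) * beta) ≤
      (2 : ℝ) ^ (beta / alpha) * c1 ^ (beta / alpha) * t ^ beta * eps ^ (-p) := by
    have h1 : t ^ ((L : ℝ) * beta) ≤ t ^ (M * beta + beta) :=
      Real.rpow_le_rpow_of_exponent_le ht1.le (by nlinarith)
    have h2 : t ^ (M * beta) = (2 * c1 * xi0 ^ alpha * eps⁻¹) ^ (beta / alpha) := by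
      rw [Real.rpow_def_of_pos ht0, Real.rpow_def_of_pos hBe, hM]
      congr 1; field_simp
    have h3 : (2 * c1 * xi0 ^ alpha * eps⁻¹) ^ (beta / alpha) =
        (2 : ℝ) ^ (beta / alpha) * c1 ^ (beta / alpha) * xi0 ^ beta * eps ^ (-(beta / alpha)) := by
      rw [Real.mul_rpow (by positivity) (by positivity), Real.mul_rpow (by positivity) (by positivity),
        Real.mul_rpow (by positivity) (by positivity), ← Real.rpow_mul hxi0.le,
        mul_div_cancel₀ _ ha.ne', Real.inv_rpow heps0.le, ← Real.rpow_neg heps0.le]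
    have h4 : eps ^ (-(beta / alpha)) ≤ eps ^ (-p) :=
      Real.rpow_le_rpow_of_exponent_ge heps0 heps_lt.le (by linarith)
    have h5 : xi0 ^ (-beta) * xi0 ^ beta = 1 := by
      rw [← Real.rpow_add hxi0]; simp
    rw [Real.rpow_add ht0, h2, h3] at h1
    calc _ ≤ xi0 ^ (-beta) * ((2 : ℝ) ^ (beta / alpha) * c1 ^ (beta / alpha) * xi0 ^ beta *
          eps ^ (-(beta / alpha)) * t ^ beta) := by gcongr
      _ = (xi0 ^ (-beta) * xi0 ^ beta) * ((2 : ℝ) ^ (beta / alpha) * c1 ^ (beta / alpha) * t ^ beta *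
          eps ^ (-(beta / alpha))) := by ring
      _ ≤ _ := by rw [h5, one_mul]; gcongr
  have hsecond : xi0 ^ (-beta) * (t ^ ((L : ℝ) * beta) * (1 - t ^ (-beta))⁻¹) ≤
      (2 : ℝ) ^ (beta / alpha) * c1 ^ (beta / alpha) * t ^ beta * (1 - t ^ (-beta))⁻¹ *
        (eps ^ (-p) * (Real.log eps⁻¹) ^ (1 + p)) := by
    calc _ = xi0 ^ (-beta) * t ^ ((L : ℝ) * beta) * (1 - t ^ (-beta))⁻¹ := by ring
      _ ≤ (2 : ℝ) ^ (beta / alpha) * c1 ^ (beta / alpha) * t ^ beta * eps ^ (-p) *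
          (1 - t ^ (-beta))⁻¹ := by gcongr
      _ = (2 : ℝ) ^ (beta / alpha) * c1 ^ (beta / alpha) * t ^ beta * (1 - t ^ (-beta))⁻¹ *
        (eps ^ (-p) * 1) := by ring
      _ ≤ _ := by gcongr
  calc _ ≤ c4 * (((2 * c6) ^ p * c7 ^ (1 + p) * (eps ^ (-p) * (Real.log eps⁻¹) ^ (1 + p))) +
      (2 : ℝ) ^ (beta / alpha) * c1 ^ (beta / alpha) * t ^ beta * (1 - t ^ (-beta))⁻¹ *
        (eps ^ (-p) * (Real.log eps⁻¹) ^ (1 + p))) :=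
        mul_le_mul_of_nonneg_left (by linarith) hc4.le
    _ = _ := by rw [hc5]; ring
end

section
/- Let alpha, beta, nu, d, c1, c4, c6, xi0 > 0 satisfy alpha*d > 2*beta*nu, set delta = (alpha*d - 2*beta*nu)/(2*(nu + d)), let T >= 2 be an integer, and let 0 < epsilon < 1 with epsilon <= 2*c1*xi0^alpha*T^{-alpha}. Set L = ceil( log(2*c1*xi0^alpha*epsilon^{-1}) / (alpha*log T) ) and n_l = ceil( (2*epsilon^{-1}*c6*xi0^{delta}*(1 - T^{-delta})^{-1})^{d/nu} * xi_l^{(alpha + 2*beta)*d/(2*(nu + d))} ) for l = 1, ..., L. Then c4 * sum_{l=1}^{L} n_l * xi_l^{-beta} <= c5 * epsilon^{-d/nu}, where c5 = c4*c8*xi0^{delta}*(1 - T^{-delta})^{-1} + c4*2^{beta/alpha}*c1^{beta/alpha}*T^{beta}*(1 - T^{-beta})^{-1} and c8 = (2*c6*xi0^{delta}*(1 - T^{-delta})^{-1})^{d/nu}. -/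
theorem icc_int_induct (f g : ℤ → ℝ) (h0 : 0 ≤ g 0)
    (hs : ∀ m : ℤ, 0 ≤ m → g m + f (m + 1) ≤ g (m + 1)) (m : ℕ) :
    ∑ l ∈ Finset.Icc (1 : ℤ) m, f l ≤ g m := by
  induction m with
  | zero => simpa using h0
  | succ k ih =>
    have e : Finset.Icc (1 : ℤ) ((k + 1 : ℕ) : ℤ) = insert ((k : ℤ) + 1) (Finset.Icc (1 : ℤ) k) := by
      ext x
      simp only [Finset.mem_Icc, Finset.mem_insert]
      push_cast
      omega
    rw [e, Finset.sum_insert (by simp)]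
    have := hs k (by positivity)
    push_cast
    linarith

theorem geo_neg (t s : ℝ) (ht : 1 < t) (hs : 0 < s) (m : ℕ) :
    ∑ l ∈ Finset.Icc (1 : ℤ) m, t ^ (-(l : ℝ) * s) ≤ (1 - t ^ (-s))⁻¹ := by
  have ht0 : 0 < t := by linarith
  have hr : t ^ (-s) < 1 := Real.rpow_lt_one_of_one_lt_of_neg ht (by linarith)
  have hr' : 0 < 1 - t ^ (-s) := by linarith
  have hr0 : 0 < t ^ (-s) := by positivity
  have h := icc_int_induct (fun l => t ^ (-(l : ℝ) * s))
    (fun l => (1 - t ^ (-s))⁻¹ * (1 - t ^ (-(l : ℝ) * s))) (by simp) (by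
      intro m hm
      have e : t ^ (-((m + 1 : ℤ) : ℝ) * s) = t ^ (-(m : ℝ) * s) * t ^ (-s) := by
        rw [← Real.rpow_add ht0]; congr 1; push_cast; ring
      simp only [e]
      have hx : 0 < t ^ (-(m : ℝ) * s) := by positivity
      generalize t ^ (-(m : ℝ) * s) = x at *
      generalize t ^ (-s) = r at *
      have : (1 - r)⁻¹ * (1 - x * r) = (1 - r)⁻¹ * (1 - x) + x := by
        field_simp; ring
      rw [this]
      nlinarith) m
  refine h.trans ?_
  have : 0 < t ^ (-((m : ℤ) : ℝ) * s) := by positivity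
  have h2 : 0 < (1 - t ^ (-s))⁻¹ := by positivity
  nlinarith

theorem geo_pos (t s : ℝ) (ht : 1 < t) (hs : 0 < s) (m : ℕ) :
    ∑ l ∈ Finset.Icc (1 : ℤ) m, t ^ ((l : ℝ) * s) ≤ (1 - t ^ (-s))⁻¹ * t ^ ((m : ℝ) * s) := by
  have ht0 : 0 < t := by linarith
  have hr : t ^ (-s) < 1 := Real.rpow_lt_one_of_one_lt_of_neg ht (by linarith)
  have hr' : 0 < 1 - t ^ (-s) := by linarith
  have h := icc_int_induct (fun l => t ^ ((l : ℝ) * s))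
    (fun l => (1 - t ^ (-s))⁻¹ * t ^ ((l : ℝ) * s)) (by positivity) (by
      intro m hm
      have e : t ^ ((m : ℝ) * s) = t ^ (((m + 1 : ℤ) : ℝ) * s) * t ^ (-s) := by
        rw [← Real.rpow_add ht0]; congr 1; push_cast; ring
      simp only [e]
      generalize t ^ (((m + 1 : ℤ) : ℝ) * s) = x at *
      generalize t ^ (-s) = r at *
      apply le_of_eq
      field_simp; ring) m
  simpa using h

/-- Total cost bound in the case `αd > 2βν` of the cost complexity
theorem: `c4 ∑_{l=1}^L n_l ξ_l^{-β} ≤ c5 ε^{-d/ν}`. -/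
theorem stmt9 (alpha beta nu d c1 c4 c6 xi0 eps : ℝ) (T : ℤ)
    (ha : 0 < alpha) (hb : 0 < beta) (hnu : 0 < nu) (hd : 0 < d)
    (hc1 : 0 < c1) (hc4 : 0 < c4) (hc6 : 0 < c6) (hxi0 : 0 < xi0)
    (hgt : alpha * d > 2 * beta * nu) (hT : 2 ≤ T)
    (heps0 : 0 < eps) (heps1 : eps < 1)
    (heps2 : eps ≤ 2 * c1 * xi0 ^ alpha * (T : ℝ) ^ (-alpha))
    (delta : ℝ) (hdelta : delta = (alpha * d - 2 * beta * nu) / (2 * (nu + d)))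
    (L : ℤ)
    (hL : L = ⌈Real.log (2 * c1 * xi0 ^ alpha * eps⁻¹) / (alpha * Real.log (T : ℝ))⌉)
    (n : ℤ → ℤ)
    (hn : ∀ l ∈ Finset.Icc (1 : ℤ) L,
      n l = ⌈(2 * eps⁻¹ * c6 * xi0 ^ delta * (1 - (T : ℝ) ^ (-delta))⁻¹) ^ (d / nu) *
        (xi0 * (T : ℝ) ^ (-(l : ℝ))) ^ ((alpha + 2 * beta) * d / (2 * (nu + d)))⌉)
    (c5 c8 : ℝ)
    (hc8 : c8 = (2 * c6 * xi0 ^ delta * (1 - (T : ℝ) ^ (-delta))⁻¹) ^ (d / nu))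
    (hc5 : c5 = c4 * c8 * xi0 ^ delta * (1 - (T : ℝ) ^ (-delta))⁻¹ +
      c4 * (2 : ℝ) ^ (beta / alpha) * c1 ^ (beta / alpha) * (T : ℝ) ^ beta *
        (1 - (T : ℝ) ^ (-beta))⁻¹) :
    c4 * ∑ l ∈ Finset.Icc (1 : ℤ) L, (n l : ℝ) * (xi0 * (T : ℝ) ^ (-(l : ℝ))) ^ (-beta)
      ≤ c5 * eps ^ (-(d / nu)) := by
  have ht : (1 : ℝ) < T := by exact_mod_cast (by omega : (1 : ℤ) < T)
  have ht0 : (0 : ℝ) < T := by linarith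
  have hdel : 0 < delta := by rw [hdelta]; apply div_pos <;> linarith
  have hrd : 0 < 1 - (T : ℝ) ^ (-delta) := by
    linarith [Real.rpow_lt_one_of_one_lt_of_neg ht (by linarith : -delta < 0)]
  have hrb : 0 < 1 - (T : ℝ) ^ (-beta) := by
    linarith [Real.rpow_lt_one_of_one_lt_of_neg ht (by linarith : -beta < 0)]
  have hc8p : 0 < c8 := by rw [hc8]; positivity
  have hc5p : 0 < c5 := by rw [hc5]; positivity
  rcases lt_or_ge L 0 with hL0 | hL0
  · rw [Finset.Icc_eq_empty (by omega)]
    simp only [Finset.sum_empty, mul_zero]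
    positivity
  have hA : (2 * eps⁻¹ * c6 * xi0 ^ delta * (1 - (T : ℝ) ^ (-delta))⁻¹) ^ (d / nu)
      = c8 * eps ^ (-(d / nu)) := by
    rw [hc8, Real.rpow_neg heps0.le, ← Real.inv_rpow heps0.le,
      ← Real.mul_rpow (by positivity) (by positivity)]
    congr 1; ring
  set E := eps ^ (-(d / nu)) with hE
  have hEp : 0 < E := by positivity
  -- termwise bound
  have hterm : ∀ l ∈ Finset.Icc (1 : ℤ) L,
      (n l : ℝ) * (xi0 * (T : ℝ) ^ (-(l : ℝ))) ^ (-beta) ≤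
      c8 * E * xi0 ^ delta * (T : ℝ) ^ (-(l : ℝ) * delta)
        + xi0 ^ (-beta) * (T : ℝ) ^ ((l : ℝ) * beta) := by
    intro l hl
    have hx : 0 < xi0 * (T : ℝ) ^ (-(l : ℝ)) := by positivity
    have h1 : (n l : ℝ) ≤ c8 * E *
        (xi0 * (T : ℝ) ^ (-(l : ℝ))) ^ ((alpha + 2 * beta) * d / (2 * (nu + d))) + 1 := by
      rw [hn l hl, hA]
      exact (Int.ceil_lt_add_one _).le
    have e1 : (xi0 * (T : ℝ) ^ (-(l : ℝ))) ^ ((alpha + 2 * beta) * d / (2 * (nu + d))) *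
        (xi0 * (T : ℝ) ^ (-(l : ℝ))) ^ (-beta) = xi0 ^ delta * (T : ℝ) ^ (-(l : ℝ) * delta) := by
      rw [← Real.rpow_add hx]
      have : (alpha + 2 * beta) * d / (2 * (nu + d)) + -beta = delta := by
        rw [hdelta]; field_simp; ring
      rw [this, Real.mul_rpow hxi0.le (by positivity), ← Real.rpow_mul ht0.le]
    have e2 : (xi0 * (T : ℝ) ^ (-(l : ℝ))) ^ (-beta) =
        xi0 ^ (-beta) * (T : ℝ) ^ ((l : ℝ) * beta) := by
      rw [Real.mul_rpow hxi0.le (by positivity), ← Real.rpow_mul ht0.le]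
      congr 2; ring
    calc _ ≤ _ := mul_le_mul_of_nonneg_right h1 (by positivity)
      _ = c8 * E * ((xi0 * (T : ℝ) ^ (-(l : ℝ))) ^ ((alpha + 2 * beta) * d / (2 * (nu + d))) *
        (xi0 * (T : ℝ) ^ (-(l : ℝ))) ^ (-beta)) + (xi0 * (T : ℝ) ^ (-(l : ℝ))) ^ (-beta) := by ring
      _ = _ := by rw [e1, e2]; ring
  have hsum := Finset.sum_le_sum hterm
  rw [Finset.sum_add_distrib, ← Finset.mul_sum, ← Finset.mul_sum] at hsum
  have hlogT : 0 < Real.log T := Real.log_pos ht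
  -- bound on T^(L beta)
  have hTL : (T : ℝ) ^ ((L : ℝ) * beta) ≤
      (T : ℝ) ^ beta * (2 ^ (beta / alpha) * c1 ^ (beta / alpha) * xi0 ^ beta) * E := by
    have hL1 : (L : ℝ) ≤ Real.log (2 * c1 * xi0 ^ alpha * eps⁻¹) / (alpha * Real.log (T : ℝ)) + 1 := by
      rw [hL]; exact (Int.ceil_lt_add_one _).le
    have h1 : (T : ℝ) ^ ((L : ℝ) * beta) ≤ (T : ℝ) ^
        ((Real.log (2 * c1 * xi0 ^ alpha * eps⁻¹) / (alpha * Real.log (T : ℝ)) + 1) * beta) :=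
      Real.rpow_le_rpow_of_exponent_le ht.le (mul_le_mul_of_nonneg_right hL1 hb.le)
    have h2 : (T : ℝ) ^
        ((Real.log (2 * c1 * xi0 ^ alpha * eps⁻¹) / (alpha * Real.log (T : ℝ)) + 1) * beta)
        = (T : ℝ) ^ beta * (2 * c1 * xi0 ^ alpha * eps⁻¹) ^ (beta / alpha) := by
      rw [add_mul, one_mul, Real.rpow_add ht0, mul_comm]
      congr 1
      have hX : 0 < 2 * c1 * xi0 ^ alpha * eps⁻¹ := by positivity
      generalize 2 * c1 * xi0 ^ alpha * eps⁻¹ = X at hX ⊢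
      rw [Real.rpow_def_of_pos ht0, Real.rpow_def_of_pos hX]
      congr 1; field_simp
    have h3 : (2 * c1 * xi0 ^ alpha * eps⁻¹) ^ (beta / alpha) =
        2 ^ (beta / alpha) * c1 ^ (beta / alpha) * xi0 ^ beta * eps ^ (-(beta / alpha)) := by
      rw [Real.mul_rpow (by positivity) (by positivity),
        Real.mul_rpow (by positivity) (by positivity),
        Real.mul_rpow (by positivity) (by positivity), ← Real.rpow_mul hxi0.le,
        Real.inv_rpow heps0.le, Real.rpow_neg heps0.le]
      congr 3; field_simp
    have h4 : eps ^ (-(beta / alpha)) ≤ E := by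
      apply Real.rpow_le_rpow_of_exponent_ge heps0 heps1.le
      apply neg_le_neg
      rw [div_le_div_iff₀ ha hnu]
      nlinarith [mul_pos hb hnu]
    refine h1.trans ?_
    rw [h2, h3, ← mul_assoc, ← mul_assoc]
    exact mul_le_mul_of_nonneg_left h4 (by positivity)
  have g1 : ∑ l ∈ Finset.Icc (1 : ℤ) L, (T : ℝ) ^ (-(l : ℝ) * delta) ≤
      (1 - (T : ℝ) ^ (-delta))⁻¹ := by
    have := geo_neg T delta ht hdel L.toNat
    rwa [Int.toNat_of_nonneg hL0] at this
  have g2 : ∑ l ∈ Finset.Icc (1 : ℤ) L, (T : ℝ) ^ ((l : ℝ) * beta) ≤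
      (1 - (T : ℝ) ^ (-beta))⁻¹ * (T : ℝ) ^ ((L : ℝ) * beta) := by
    have := geo_pos T beta ht hb L.toNat
    have e : ((L.toNat : ℕ) : ℝ) = (L : ℝ) := by
      exact_mod_cast congrArg (Int.cast : ℤ → ℝ) (Int.toNat_of_nonneg hL0)
    rwa [Int.toNat_of_nonneg hL0, e] at this
  have g3 := g2.trans (mul_le_mul_of_nonneg_left hTL (by positivity))
  have k1 := mul_le_mul_of_nonneg_left g1 (by positivity : 0 ≤ c8 * E * xi0 ^ delta)
  have k2 := mul_le_mul_of_nonneg_left g3 (by positivity : 0 ≤ xi0 ^ (-beta))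
  have hxx : xi0 ^ (-beta) * xi0 ^ beta = 1 := by
    rw [← Real.rpow_add hxi0]; simp
  have k := mul_le_mul_of_nonneg_left (hsum.trans (add_le_add k1 k2)) hc4.le
  refine k.trans (le_of_eq ?_)
  rw [hc5]
  linear_combination (c4 * (1 - (T : ℝ) ^ (-beta))⁻¹ * (T : ℝ) ^ beta *
    (2 ^ (beta / alpha) * c1 ^ (beta / alpha)) * E) * hxx
end

section
/- Let alpha, beta, nu, d, c1, c4, c12 > 0 with alpha*d >= 2*beta*nu, let epsilon > 0, and let xi_H > 0 satisfy (epsilon/2)^{1 + alpha*d/(2*beta*nu)} <= c1 * xi_H^{alpha} <= epsilon/2. Set n_H = ceil( (2*epsilon^{-1}*c12*xi_H^{alpha/2})^{d/nu} ). Then c4 * n_H * xi_H^{-beta} <= c16 * epsilon^{-beta/alpha - d/(2*nu)}, where c16 = c4*(2*c12)^{d/nu}*(2*c1)^{beta/alpha - d/(2*nu)} + c4*c1^{beta/alpha}*2^{beta/alpha + d/(2*nu)}. -/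
/-- Total cost bound for the single high-fidelity RKHS
interpolator: with `n_H = ⌈(2 ε⁻¹ c12 ξ_H^{α/2})^{d/ν}⌉` and the sandwich
condition on `ξ_H`, one has `c4 n_H ξ_H^{-β} ≤ c16 ε^{-β/α - d/(2ν)}`. -/
theorem stmt15 (alpha beta nu d c1 c4 c12 eps xiH : ℝ) (nH : ℤ)
    (ha : 0 < alpha) (hb : 0 < beta) (hnu : 0 < nu) (hd : 0 < d)
    (hc1 : 0 < c1) (hc4 : 0 < c4) (hc12 : 0 < c12)
    (hge : alpha * d ≥ 2 * beta * nu)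
    (heps : 0 < eps) (hxiH : 0 < xiH)
    (hlow : (eps / 2) ^ (1 + alpha * d / (2 * beta * nu)) ≤ c1 * xiH ^ alpha)
    (hhigh : c1 * xiH ^ alpha ≤ eps / 2)
    (hnH : nH = ⌈(2 * eps⁻¹ * c12 * xiH ^ (alpha / 2)) ^ (d / nu)⌉)
    (c16 : ℝ)
    (hc16 : c16 = c4 * (2 * c12) ^ (d / nu) * (2 * c1) ^ (beta / alpha - d / (2 * nu)) +
      c4 * c1 ^ (beta / alpha) * (2 : ℝ) ^ (beta / alpha + d / (2 * nu))) :
    c4 * (nH : ℝ) * xiH ^ (-beta) ≤ c16 * eps ^ (-(beta / alpha) - d / (2 * nu)) := by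
  obtain ⟨X, hX⟩ : ∃ X, X = xiH ^ alpha := ⟨_, rfl⟩
  have hX0 : 0 < X := hX ▸ Real.rpow_pos_of_pos hxiH _
  obtain ⟨p, hp⟩ : ∃ p, p = d / (2 * nu) := ⟨_, rfl⟩
  obtain ⟨q, hq⟩ : ∃ q, q = beta / alpha := ⟨_, rfl⟩
  have hq0 : 0 < q := hq ▸ div_pos hb ha
  have h2p : d / nu = 2 * p := by rw [hp]; field_simp
  have hpq : 0 ≤ p - q := by
    rw [hp, hq, sub_nonneg, div_le_div_iff₀ ha (by positivity)]
    linarith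
  have hx1 : xiH ^ (alpha / 2) = X ^ ((1 : ℝ) / 2) := by
    rw [hX, ← Real.rpow_mul hxiH.le]; congr 1; ring
  have hx2 : xiH ^ (-beta) = X ^ (-q) := by
    rw [hX, hq, ← Real.rpow_mul hxiH.le]; congr 1; field_simp
  have hexp : 1 + alpha * d / (2 * beta * nu) = (q + p) * q⁻¹ := by
    rw [hp, hq]; field_simp
  rw [← hX] at hlow hhigh
  rw [hexp] at hlow
  rw [hx1, h2p] at hnH
  rw [← hp, ← hq, h2p] at hc16
  rw [← hp, ← hq, hx2]
  have hn : (nH : ℝ) ≤ (2 * eps⁻¹ * c12 * X ^ ((1 : ℝ) / 2)) ^ (2 * p) + 1 := by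
    rw [hnH]; exact (Int.ceil_lt_add_one _).le
  have hA : (2 * eps⁻¹ * c12 * X ^ ((1 : ℝ) / 2)) ^ (2 * p)
      = (2 * c12) ^ (2 * p) * eps ^ (-(2 * p)) * X ^ p := by
    rw [show 2 * eps⁻¹ * c12 * X ^ ((1 : ℝ) / 2) = (2 * c12) * eps⁻¹ * X ^ ((1 : ℝ) / 2) by ring,
      Real.mul_rpow (by positivity) (by positivity), Real.mul_rpow (by positivity) (by positivity),
      Real.inv_rpow heps.le, ← Real.rpow_neg heps.le, ← Real.rpow_mul hX0.le]
    congr 2; ring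
  have h1 : X ^ (p - q) ≤ eps ^ (p - q) * (2 * c1) ^ (q - p) := by
    have hle : X ≤ eps * (2 * c1)⁻¹ := by
      rw [← div_eq_mul_inv, le_div_iff₀ (by positivity)]; linarith
    refine (Real.rpow_le_rpow hX0.le hle hpq).trans_eq ?_
    rw [Real.mul_rpow heps.le (by positivity), Real.inv_rpow (by positivity),
      ← Real.rpow_neg (by positivity), neg_sub]
  have h2 : X ^ (-q) ≤ c1 ^ q * (2 ^ (q + p) * eps ^ (-q - p)) := by
    have h3 := Real.rpow_le_rpow (by positivity) hlow hq0.le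
    rw [← Real.rpow_mul (by positivity), mul_assoc, inv_mul_cancel₀ hq0.ne', mul_one,
      Real.mul_rpow hc1.le hX0.le, Real.div_rpow heps.le (by norm_num)] at h3
    rw [show -q - p = -(q + p) by ring, Real.rpow_neg hX0.le, Real.rpow_neg heps.le]
    have e1 : 0 < X ^ q := by positivity
    have e2 : 0 < eps ^ (q + p) := by positivity
    have e3 : (0 : ℝ) < 2 ^ (q + p) := by positivity
    rw [div_le_iff₀ e3] at h3
    rw [← div_eq_mul_inv, ← mul_div_assoc, inv_eq_one_div, div_le_div_iff₀ e1 e2]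
    linarith
  have hXX : X ^ p * X ^ (-q) = X ^ (p - q) := by
    rw [← Real.rpow_add hX0]; rfl
  have hee : eps ^ (-(2 * p)) * eps ^ (p - q) = eps ^ (-q - p) := by
    rw [← Real.rpow_add heps]; congr 1; ring
  have hK : 0 ≤ c4 * ((2 * c12) ^ (2 * p) * eps ^ (-(2 * p))) := by positivity
  calc c4 * (nH : ℝ) * X ^ (-q)
      ≤ c4 * ((2 * c12) ^ (2 * p) * eps ^ (-(2 * p)) * X ^ p + 1) * X ^ (-q) := by
        rw [hA] at hn
        gcongr
    _ = c4 * ((2 * c12) ^ (2 * p) * eps ^ (-(2 * p))) * (X ^ p * X ^ (-q)) + c4 * X ^ (-q) := by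
        ring
    _ ≤ c4 * ((2 * c12) ^ (2 * p) * eps ^ (-(2 * p))) * (eps ^ (p - q) * (2 * c1) ^ (q - p))
        + c4 * (c1 ^ q * (2 ^ (q + p) * eps ^ (-q - p))) := by
        rw [hXX]
        gcongr
    _ = c16 * eps ^ (-q - p) := by
        rw [hc16, ← hee]; ring
end

section
/- Let L be a positive integer, let a_1, ..., a_L and C_1, ..., C_L be positive reals, let gamma > 0, and let B > 0. Define mu = B / ( sum_{k=1}^{L} C_k * (a_k/C_k)^{1/(gamma+1)} ) and n_l* = mu * (a_l/C_l)^{1/(gamma+1)} for l = 1, ..., L. Then sum_{l=1}^{L} C_l * n_l* = B, and for any positive reals m_1, ..., m_L with sum_{l=1}^{L} C_l * m_l <= B, we have sum_{l=1}^{L} a_l * (n_l*)^{-gamma} <= sum_{l=1}^{L} a_l * m_l^{-gamma}. -/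
/-- Optimal sample-size allocation by Lagrange multipliers: with
`μ = B / ∑_k C_k (a_k/C_k)^{1/(γ+1)}` and `n_l* = μ (a_l/C_l)^{1/(γ+1)}`, the
budget is exactly exhausted, `∑_l C_l n_l* = B`, and `n*` minimizes
`∑_l a_l n_l^{-γ}` among all positive allocations with `∑_l C_l m_l ≤ B`. -/
theorem stmt17 (L : ℕ) (hL : 0 < L) (a C : ℕ → ℝ) (gamma B : ℝ)
    (ha : ∀ l ∈ Finset.Icc 1 L, 0 < a l) (hC : ∀ l ∈ Finset.Icc 1 L, 0 < C l)
    (hg : 0 < gamma) (hB : 0 < B)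
    (mu : ℝ)
    (hmu : mu = B / ∑ k ∈ Finset.Icc 1 L, C k * (a k / C k) ^ (1 / (gamma + 1)))
    (nstar : ℕ → ℝ)
    (hn : ∀ l ∈ Finset.Icc 1 L, nstar l = mu * (a l / C l) ^ (1 / (gamma + 1))) :
    (∑ l ∈ Finset.Icc 1 L, C l * nstar l = B) ∧
    ∀ m : ℕ → ℝ, (∀ l ∈ Finset.Icc 1 L, 0 < m l) →
      (∑ l ∈ Finset.Icc 1 L, C l * m l ≤ B) →
      ∑ l ∈ Finset.Icc 1 L, a l * (nstar l) ^ (-gamma) ≤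
        ∑ l ∈ Finset.Icc 1 L, a l * (m l) ^ (-gamma) := by
  have hne : (Finset.Icc 1 L).Nonempty := ⟨1, by simp; omega⟩
  have hw : ∀ l ∈ Finset.Icc 1 L, 0 < (a l / C l) ^ (1 / (gamma + 1)) := fun l hl =>
    Real.rpow_pos_of_pos (div_pos (ha l hl) (hC l hl)) _
  have hS : 0 < ∑ k ∈ Finset.Icc 1 L, C k * (a k / C k) ^ (1 / (gamma + 1)) :=
    Finset.sum_pos (fun l hl => mul_pos (hC l hl) (hw l hl)) hne
  have hmu0 : 0 < mu := hmu ▸ div_pos hB hS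
  have hsum : ∑ l ∈ Finset.Icc 1 L, C l * nstar l = B := by
    have : ∑ l ∈ Finset.Icc 1 L, C l * nstar l
        = mu * ∑ k ∈ Finset.Icc 1 L, C k * (a k / C k) ^ (1 / (gamma + 1)) := by
      rw [Finset.mul_sum]
      refine Finset.sum_congr rfl fun l hl => ?_
      rw [hn l hl]; ring
    rw [this, hmu, div_mul_cancel₀ _ hS.ne']
  refine ⟨hsum, fun m hm hmB => ?_⟩
  set K : ℝ := mu ^ (-gamma) / mu with hK
  have hK0 : 0 < K := div_pos (Real.rpow_pos_of_pos hmu0 _) hmu0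
  have key : ∀ l ∈ Finset.Icc 1 L,
      a l * nstar l ^ (-gamma) - gamma * K * (C l * m l - C l * nstar l)
        ≤ a l * m l ^ (-gamma) := by
    intro l hl
    have hwl := hw l hl
    have hCl := hC l hl
    have hml := hm l hl
    have hn0 : 0 < nstar l := by rw [hn l hl]; exact mul_pos hmu0 hwl
    have h1 : a l * nstar l ^ (-gamma) = K * (C l * nstar l) := by
      have haw : a l = C l * ((a l / C l) ^ (1 / (gamma + 1))) ^ (gamma + 1) := by
        rw [← Real.rpow_mul (div_pos (ha l hl) hCl).le, one_div_mul_cancel (by positivity),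
          Real.rpow_one]
        field_simp
      rw [hn l hl, hK]
      generalize (a l / C l) ^ (1 / (gamma + 1)) = w at *
      rw [haw, Real.mul_rpow hmu0.le hwl.le, Real.rpow_add hwl, Real.rpow_one,
        Real.rpow_neg hwl.le]
      have := Real.rpow_pos_of_pos hwl gamma
      field_simp
    have h2 : m l ^ (-gamma) = nstar l ^ (-gamma) * (m l / nstar l) ^ (-gamma) := by
      rw [← Real.mul_rpow hn0.le (div_pos hml hn0).le, mul_div_cancel₀ _ hn0.ne']
    have h3 : 1 - gamma * (m l / nstar l - 1) ≤ (m l / nstar l) ^ (-gamma) := by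
      have ht := div_pos hml hn0
      rw [Real.rpow_def_of_pos ht]
      have e1 := Real.add_one_le_exp (Real.log (m l / nstar l) * -gamma)
      have e2 := mul_le_mul_of_nonneg_left (Real.log_le_sub_one_of_pos ht) hg.le
      linarith
    rw [h2, ← mul_assoc, h1]
    calc _ = K * (C l * nstar l) * (1 - gamma * (m l / nstar l - 1)) := by
          field_simp
          try ring
      _ ≤ _ := mul_le_mul_of_nonneg_left h3 (by positivity)
  have hs := Finset.sum_le_sum key
  rw [Finset.sum_sub_distrib, ← Finset.mul_sum, Finset.sum_sub_distrib, hsum] at hs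
  have : 0 ≤ gamma * K * (B - ∑ l ∈ Finset.Icc 1 L, C l * m l) :=
    mul_nonneg (by positivity) (by linarith)
  linarith
end
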